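/- arXiv:2507.19244 — 2 statements merged into one kernel-verified Lean document; each statement's English description precedes it below -/
import Mathlib

section
/- Let a < b, sigma > 0, and Psi, Phi be real numbers, and define, for real mu and s > 0, the cost V(mu, s) = (1/(2s)) * (Phi - 2*Psi*mu + mu^2) + log(∫_a^b exp(-(x-mu)^2/(2s)) dx). Then for every mu and s > 0, the partial derivative of V with respect to mu equals (1/s) * (m1(mu, s) - Psi) * (-1) in the sense that ∂V/∂mu = (1/s)*(mu - Psi) + (1/s)*( (∫_{a-mu}^{b-mu} x * exp(-x^2/(2s)) dx) / (∫_{a-mu}^{b-mu} exp(-x^2/(2s)) dx) ), which equals (1/s) * (m1(mu, s) - Psi), where m1(mu, s) = (∫_a^b x * exp(-(x-mu)^2/(2s)) dx)/(∫_a^b exp(-(x-mu)^2/(2s)) dx) is the mean of the Gaussian N(mu, s) truncated to [a,b]. -/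
open Real intervalIntegral

/-- For the EM cost `V(μ, s) = (1/(2s))(Φ - 2Ψμ + μ²) + log ∫_a^b exp(-(x-μ)²/(2s)) dx`,
its partial derivative with respect to `μ` equals
`(1/s)(μ - Ψ) + (1/s) (∫_{a-μ}^{b-μ} x exp(-x²/(2s)) dx)/(∫_{a-μ}^{b-μ} exp(-x²/(2s)) dx)`,
which equals `(1/s)(m₁(μ, s) - Ψ)`, where `m₁(μ, s)` is the mean of the Gaussian
`N(μ, s)` truncated to `[a, b]`. -/
theorem em_cost_deriv_mu (a b Ψ Φ : ℝ) (hab : a < b) (μ s : ℝ) (hs : 0 < s) :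
    HasDerivAt
      (fun m : ℝ =>
        (1 / (2 * s)) * (Φ - 2 * Ψ * m + m ^ 2) +
          Real.log (∫ x in a..b, Real.exp (-(x - m) ^ 2 / (2 * s))))
      ((1 / s) * (μ - Ψ) +
        (1 / s) *
          ((∫ x in (a - μ)..(b - μ), x * Real.exp (-x ^ 2 / (2 * s))) /
            (∫ x in (a - μ)..(b - μ), Real.exp (-x ^ 2 / (2 * s))))) μ ∧
    (1 / s) * (μ - Ψ) +
        (1 / s) *
          ((∫ x in (a - μ)..(b - μ), x * Real.exp (-x ^ 2 / (2 * s))) /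
            (∫ x in (a - μ)..(b - μ), Real.exp (-x ^ 2 / (2 * s)))) =
      (1 / s) *
        ((∫ x in a..b, x * Real.exp (-(x - μ) ^ 2 / (2 * s))) /
            (∫ x in a..b, Real.exp (-(x - μ) ^ 2 / (2 * s))) - Ψ) := by
  have hg : Continuous (fun x : ℝ => Real.exp (-x ^ 2 / (2 * s))) := by fun_prop
  have hxg : Continuous (fun x : ℝ => x * Real.exp (-x ^ 2 / (2 * s))) := by fun_prop
  have hshift : ∀ m : ℝ, (∫ x in a..b, Real.exp (-(x - m) ^ 2 / (2 * s))) =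
      ∫ x in (a - m)..(b - m), Real.exp (-x ^ 2 / (2 * s)) := fun m =>
    intervalIntegral.integral_comp_sub_right (fun x => Real.exp (-x ^ 2 / (2 * s))) m
  have hpos : 0 < ∫ x in (a - μ)..(b - μ), Real.exp (-x ^ 2 / (2 * s)) :=
    intervalIntegral.intervalIntegral_pos_of_pos (hg.intervalIntegrable _ _)
      (fun x => Real.exp_pos _) (by linarith)
  -- the first moment of the centred kernel, by the fundamental theorem of calculus
  have hftc : (∫ x in (a - μ)..(b - μ), x * Real.exp (-x ^ 2 / (2 * s))) =
      -s * Real.exp (-(b - μ) ^ 2 / (2 * s)) - -s * Real.exp (-(a - μ) ^ 2 / (2 * s)) := by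
    refine intervalIntegral.integral_eq_sub_of_hasDerivAt
      (f := fun x => -s * Real.exp (-x ^ 2 / (2 * s))) (fun x _ => ?_)
      (hxg.intervalIntegrable _ _)
    have h := ((((hasDerivAt_id x).pow 2).neg.div_const (2 * s)).exp).const_mul (-s)
    refine h.congr_deriv ?_
    simp
    field_simp
  have hG : ∀ u : ℝ, HasDerivAt (fun v => ∫ x in (0 : ℝ)..v, Real.exp (-x ^ 2 / (2 * s)))
      (Real.exp (-u ^ 2 / (2 * s))) u := fun u => hg.integral_hasStrictDerivAt 0 u |>.hasDerivAt
  have hI : HasDerivAt (fun m : ℝ => ∫ x in a..b, Real.exp (-(x - m) ^ 2 / (2 * s)))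
      ((1 / s) * ∫ x in (a - μ)..(b - μ), x * Real.exp (-x ^ 2 / (2 * s))) μ := by
    have hb := (hG (b - μ)).comp μ ((hasDerivAt_id μ).const_sub b)
    have ha := (hG (a - μ)).comp μ ((hasDerivAt_id μ).const_sub a)
    have h := hb.sub ha
    have hfun : (fun m : ℝ => ∫ x in a..b, Real.exp (-(x - m) ^ 2 / (2 * s))) =
        fun m => (∫ x in (0 : ℝ)..(b - m), Real.exp (-x ^ 2 / (2 * s))) -
          ∫ x in (0 : ℝ)..(a - m), Real.exp (-x ^ 2 / (2 * s)) := by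
      funext m
      rw [hshift m, intervalIntegral.integral_interval_sub_left
        (hg.intervalIntegrable _ _) (hg.intervalIntegrable _ _)]
    rw [hfun]
    refine HasDerivAt.congr_deriv h ?_
    rw [hftc]
    field_simp
    try ring
  constructor
  · have hlog := hI.log (by rw [hshift μ]; exact hpos.ne')
    have hq : HasDerivAt (fun m : ℝ => (1 / (2 * s)) * (Φ - 2 * Ψ * m + m ^ 2))
        ((1 / s) * (μ - Ψ)) μ := by
      have h := ((((hasDerivAt_id μ).const_mul (2 * Ψ)).const_sub Φ).add
        ((hasDerivAt_id μ).pow 2)).const_mul (1 / (2 * s))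
      refine HasDerivAt.congr_deriv h ?_
      simp
      field_simp
      try ring
    refine (hq.add hlog).congr_deriv ?_
    rw [hshift μ, mul_div_assoc]
  · have hm : (∫ x in a..b, x * Real.exp (-(x - μ) ^ 2 / (2 * s))) =
        (∫ x in (a - μ)..(b - μ), x * Real.exp (-x ^ 2 / (2 * s))) +
          μ * ∫ x in (a - μ)..(b - μ), Real.exp (-x ^ 2 / (2 * s)) := by
      rw [← intervalIntegral.integral_const_mul, ← intervalIntegral.integral_add
        (hxg.intervalIntegrable _ _) ((hg.const_mul μ).intervalIntegrable _ _),
        ← intervalIntegral.integral_comp_sub_right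
          (fun x => x * Real.exp (-x ^ 2 / (2 * s)) + μ * Real.exp (-x ^ 2 / (2 * s))) μ]
      congr 1
      funext x
      ring
    rw [hm, hshift μ, add_div, mul_div_cancel_right₀ _ hpos.ne']
    ring
end

section
/- Let a < b and Psi, Phi be real numbers, and define, for real mu and s > 0, the cost V(mu, s) = (1/(2s)) * (Phi - 2*Psi*mu + mu^2) + log(∫_a^b exp(-(x-mu)^2/(2s)) dx). Then a point (mu, s) with s > 0 satisfies ∂V/∂mu = 0 and ∂V/∂s = 0 if and only if the first and second moments of the Gaussian N(mu, s) truncated to [a,b] match the data moments, that is, (∫_a^b x * exp(-(x-mu)^2/(2s)) dx)/(∫_a^b exp(-(x-mu)^2/(2s)) dx) = Psi and (∫_a^b x^2 * exp(-(x-mu)^2/(2s)) dx)/(∫_a^b exp(-(x-mu)^2/(2s)) dx) = Phi. -/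
open Real intervalIntegral

lemma em_aux_mu (a b μ s : ℝ) (hs : 0 < s) :
    HasDerivAt (fun m : ℝ => ∫ x in a..b, Real.exp (-(x - m) ^ 2 / (2 * s)))
      (∫ x in a..b, Real.exp (-(x - μ) ^ 2 / (2 * s)) * ((x - μ) / s)) μ := by
  refine (intervalIntegral.hasDerivAt_integral_of_dominated_loc_of_deriv_le
    (μ := MeasureTheory.volume)
    (F := fun m x => Real.exp (-(x - m) ^ 2 / (2 * s)))
    (F' := fun m x => Real.exp (-(x - m) ^ 2 / (2 * s)) * ((x - m) / s))
    (bound := fun x => (|x - μ| + 1) / s)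
    (Metric.ball_mem_nhds μ one_pos) ?_ ?_ ?_ ?_ ?_ ?_).2
  · exact Filter.Eventually.of_forall fun m =>
      (by fun_prop : Continuous fun x => Real.exp (-(x - m) ^ 2 / (2 * s))).aestronglyMeasurable
  · exact (by fun_prop : Continuous fun x =>
      Real.exp (-(x - μ) ^ 2 / (2 * s))).intervalIntegrable _ _
  · exact (by fun_prop : Continuous fun x =>
      Real.exp (-(x - μ) ^ 2 / (2 * s)) * ((x - μ) / s)).aestronglyMeasurable
  · refine Filter.Eventually.of_forall fun x _ m hm => ?_
    have h1 : Real.exp (-(x - m) ^ 2 / (2 * s)) ≤ 1 :=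
      Real.exp_le_one_iff.2 (div_nonpos_of_nonpos_of_nonneg
        (by nlinarith [sq_nonneg (x - m)]) (by positivity))
    have h2 : |x - m| ≤ |x - μ| + 1 := by
      rw [Metric.mem_ball, Real.dist_eq, abs_sub_comm] at hm
      have := abs_sub_le x μ m
      linarith
    rw [norm_mul, Real.norm_eq_abs, Real.norm_eq_abs, abs_of_pos (Real.exp_pos _), abs_div,
      abs_of_pos hs]
    calc _ ≤ 1 * (|x - m| / s) := by gcongr
      _ ≤ _ := by rw [one_mul]; gcongr
  · exact (by fun_prop : Continuous fun x => (|x - μ| + 1) / s).intervalIntegrable _ _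
  · refine Filter.Eventually.of_forall fun x _ m _ => ?_
    have h := (((((hasDerivAt_id m).const_sub x).pow 2).neg).div_const (2 * s)).exp
    refine HasDerivAt.congr_deriv h ?_
    simp
    field_simp

lemma em_aux_s (a b μ s : ℝ) (hs : 0 < s) :
    HasDerivAt (fun s' : ℝ => ∫ x in a..b, Real.exp (-(x - μ) ^ 2 / (2 * s')))
      (∫ x in a..b, Real.exp (-(x - μ) ^ 2 / (2 * s)) * ((x - μ) ^ 2 / (2 * s ^ 2))) s := by
  refine (intervalIntegral.hasDerivAt_integral_of_dominated_loc_of_deriv_le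
    (μ := MeasureTheory.volume)
    (F := fun s' x => Real.exp (-(x - μ) ^ 2 / (2 * s')))
    (F' := fun s' x => Real.exp (-(x - μ) ^ 2 / (2 * s')) * ((x - μ) ^ 2 / (2 * s' ^ 2)))
    (bound := fun x => (x - μ) ^ 2 / (2 * (s / 2) ^ 2))
    (Ioi_mem_nhds (half_lt_self hs)) ?_ ?_ ?_ ?_ ?_ ?_).2
  · exact Filter.Eventually.of_forall fun m =>
      (by fun_prop : Continuous fun x => Real.exp (-(x - μ) ^ 2 / (2 * m))).aestronglyMeasurable
  · exact (by fun_prop : Continuous fun x =>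
      Real.exp (-(x - μ) ^ 2 / (2 * s))).intervalIntegrable _ _
  · exact (by fun_prop : Continuous fun x =>
      Real.exp (-(x - μ) ^ 2 / (2 * s)) * ((x - μ) ^ 2 / (2 * s ^ 2))).aestronglyMeasurable
  · refine Filter.Eventually.of_forall fun x _ m hm => ?_
    have hm' : s / 2 < m := hm
    have hm0 : 0 < m := by linarith
    have h1 : Real.exp (-(x - μ) ^ 2 / (2 * m)) ≤ 1 :=
      Real.exp_le_one_iff.2 (div_nonpos_of_nonpos_of_nonneg
        (by nlinarith [sq_nonneg (x - μ)]) (by positivity))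
    rw [Real.norm_eq_abs, abs_of_nonneg (by positivity)]
    calc _ ≤ 1 * ((x - μ) ^ 2 / (2 * m ^ 2)) := by gcongr
      _ ≤ _ := by rw [one_mul]; gcongr
  · exact (by fun_prop : Continuous fun x =>
      (x - μ) ^ 2 / (2 * (s / 2) ^ 2)).intervalIntegrable _ _
  · refine Filter.Eventually.of_forall fun x _ m hm => ?_
    have hm' : s / 2 < m := hm
    have hm0 : m ≠ 0 := by linarith
    have h := ((hasDerivAt_const m (-(x - μ) ^ 2)).div ((hasDerivAt_id m).const_mul 2)
      (by simpa using hm0)).exp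
    refine HasDerivAt.congr_deriv h ?_
    simp
    field_simp

/-- For the EM cost `V(μ, s) = (1/(2s))(Φ - 2Ψμ + μ²) + log ∫_a^b exp(-(x-μ)²/(2s)) dx`,
a point `(μ, s)` with `s > 0` is a stationary point (both partial derivatives vanish)
if and only if the first and second moments of the Gaussian `N(μ, s)` truncated to
`[a, b]` match the data moments `Ψ` and `Φ`. -/
theorem em_cost_stationary_iff_moment_matching (a b Ψ Φ : ℝ) (hab : a < b)
    (μ s : ℝ) (hs : 0 < s) :
    (deriv (fun m : ℝ =>
        (1 / (2 * s)) * (Φ - 2 * Ψ * m + m ^ 2) +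
          Real.log (∫ x in a..b, Real.exp (-(x - m) ^ 2 / (2 * s)))) μ = 0 ∧
      deriv (fun s' : ℝ =>
        (1 / (2 * s')) * (Φ - 2 * Ψ * μ + μ ^ 2) +
          Real.log (∫ x in a..b, Real.exp (-(x - μ) ^ 2 / (2 * s')))) s = 0) ↔
    ((∫ x in a..b, x * Real.exp (-(x - μ) ^ 2 / (2 * s))) /
        (∫ x in a..b, Real.exp (-(x - μ) ^ 2 / (2 * s))) = Ψ ∧
      (∫ x in a..b, x ^ 2 * Real.exp (-(x - μ) ^ 2 / (2 * s))) /
        (∫ x in a..b, Real.exp (-(x - μ) ^ 2 / (2 * s))) = Φ) := by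
  have hZ : 0 < ∫ x in a..b, Real.exp (-(x - μ) ^ 2 / (2 * s)) :=
    intervalIntegral.intervalIntegral_pos_of_pos
      ((by fun_prop : Continuous fun x =>
        Real.exp (-(x - μ) ^ 2 / (2 * s))).intervalIntegrable _ _)
      (fun x => Real.exp_pos _) hab
  have i0 : IntervalIntegrable (fun x => Real.exp (-(x - μ) ^ 2 / (2 * s)))
      MeasureTheory.volume a b := Continuous.intervalIntegrable (by fun_prop) _ _
  have i1 : IntervalIntegrable (fun x => x * Real.exp (-(x - μ) ^ 2 / (2 * s)))
      MeasureTheory.volume a b := Continuous.intervalIntegrable (by fun_prop) _ _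
  have i2 : IntervalIntegrable (fun x => x ^ 2 * Real.exp (-(x - μ) ^ 2 / (2 * s)))
      MeasureTheory.volume a b := Continuous.intervalIntegrable (by fun_prop) _ _
  have e1 : (∫ x in a..b, Real.exp (-(x - μ) ^ 2 / (2 * s)) * ((x - μ) / s)) =
      (1 / s) * ((∫ x in a..b, x * Real.exp (-(x - μ) ^ 2 / (2 * s))) -
        μ * ∫ x in a..b, Real.exp (-(x - μ) ^ 2 / (2 * s))) := by
    rw [← intervalIntegral.integral_const_mul μ, ← intervalIntegral.integral_sub i1
      (i0.const_mul μ), ← intervalIntegral.integral_const_mul]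
    congr 1
    ext x
    ring
  have e2 : (∫ x in a..b, Real.exp (-(x - μ) ^ 2 / (2 * s)) * ((x - μ) ^ 2 / (2 * s ^ 2))) =
      (1 / (2 * s ^ 2)) * (((∫ x in a..b, x ^ 2 * Real.exp (-(x - μ) ^ 2 / (2 * s))) -
        (2 * μ) * ∫ x in a..b, x * Real.exp (-(x - μ) ^ 2 / (2 * s))) +
        μ ^ 2 * ∫ x in a..b, Real.exp (-(x - μ) ^ 2 / (2 * s))) := by
    rw [← intervalIntegral.integral_const_mul (2 * μ), ← intervalIntegral.integral_sub i2
      (i1.const_mul (2 * μ)), ← intervalIntegral.integral_const_mul (μ ^ 2),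
      ← intervalIntegral.integral_add (i2.sub (i1.const_mul (2 * μ))) (i0.const_mul (μ ^ 2)),
      ← intervalIntegral.integral_const_mul]
    congr 1
    ext x
    ring
  have d1 := em_aux_mu a b μ s hs
  have d2 := em_aux_s a b μ s hs
  rw [e1] at d1
  rw [e2] at d2
  have q1 : HasDerivAt (fun m : ℝ => (1 / (2 * s)) * (Φ - 2 * Ψ * m + m ^ 2))
      ((1 / (2 * s)) * (-(2 * Ψ) + 2 * μ)) μ := by
    have h := ((((hasDerivAt_id μ).const_mul (2 * Ψ)).const_sub Φ).add
      ((hasDerivAt_id μ).pow 2)).const_mul (1 / (2 * s))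
    refine HasDerivAt.congr_deriv h ?_
    simp
  have q2 : HasDerivAt (fun s' : ℝ => (1 / (2 * s')) * (Φ - 2 * Ψ * μ + μ ^ 2))
      (-(1 / (2 * s ^ 2)) * (Φ - 2 * Ψ * μ + μ ^ 2)) s := by
    have h := ((hasDerivAt_const s (1 : ℝ)).div ((hasDerivAt_id s).const_mul 2)
      (by simpa using hs.ne')).mul_const (Φ - 2 * Ψ * μ + μ ^ 2)
    refine HasDerivAt.congr_deriv h ?_
    simp
    field_simp
  have D1 := (q1.add (d1.log hZ.ne')).deriv
  have D2 := (q2.add (d2.log hZ.ne')).deriv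
  have D1' := D1
  simp only [Pi.add_def] at D1 D2
  rw [D1, D2]
  clear D1 D2 D1' q1 q2 d1 d2 e1 e2 i0 i1 i2
  generalize (∫ x in a..b, Real.exp (-(x - μ) ^ 2 / (2 * s))) = Z at *
  generalize (∫ x in a..b, x * Real.exp (-(x - μ) ^ 2 / (2 * s))) = M at *
  generalize (∫ x in a..b, x ^ 2 * Real.exp (-(x - μ) ^ 2 / (2 * s))) = N at *
  have hs0 := hs.ne'
  have hZ0 := hZ.ne'
  have r1 : 1 / (2 * s) * (-(2 * Ψ) + 2 * μ) + 1 / s * (M - μ * Z) / Z =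
      (1 / s) * (M / Z - Ψ) := by
    field_simp
    ring
  have r2 : -(1 / (2 * s ^ 2)) * (Φ - 2 * Ψ * μ + μ ^ 2) +
      1 / (2 * s ^ 2) * (N - 2 * μ * M + μ ^ 2 * Z) / Z =
      (1 / (2 * s ^ 2)) * ((N / Z - Φ) - 2 * μ * (M / Z - Ψ)) := by
    field_simp
    ring
  rw [r1, r2, mul_eq_zero_iff_left (by positivity), mul_eq_zero_iff_left (by positivity)]
  constructor
  · rintro ⟨h1, h2⟩
    rw [h1] at h2
    constructor <;> linarith
  · rintro ⟨h1, h2⟩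
    rw [h1, h2]
    constructor <;> ring
end
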